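/- arXiv:1609.03929 — 6 statements merged into one kernel-verified Lean document; each statement's English description precedes it below -/
import Mathlib

section
/- Let n ≥ 3, let ζ = (ξ, η) ∈ ℝ × ℝ^{n-1} be nonzero, and let δ > 0. Suppose β⁰ ∈ ℂ, β' ∈ ℂ^{n-1} and φ ∈ ℂ satisfy ξ·β⁰ + η·β' = 0, and suppose that for every S̃ ∈ ℝ and every unit vector Ŷ ∈ ℝ^{n-1} with ξ·S̃ + η·Ŷ = 0 and |S̃| < δ one has S̃·β⁰ + Ŷ·β' + φ = 0. Then β⁰ = 0, β' = 0 and φ = 0. -/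
open scoped BigOperators

/-!
Write `L(S, Y) = S β⁰ + Y·β'`. Since `n - 1 ≥ 2` there is a nonzero `f` with `η·f = 0`, and
evaluating the hypothesis at the two admissible points `± (0, f/|f|)` gives `φ = 0`. By homogeneity
`L` then vanishes on the part of `ζ^⊥` where `|S| < δ |Y|`. This cone is relatively open in `ζ^⊥`
and contains `(0, f)`, so it spans `ζ^⊥`: for `v ∈ ζ^⊥` the vector `(0, f) + t v` lies in it for
small `t ≠ 0`. Hence `L` vanishes on `ζ^⊥`; it also vanishes at `ζ` by assumption, so `L = 0`.
-/

/-- In dimension at least two (witnessed by the distinct indices `a`, `b`) every vector has a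
nonzero orthogonal vector. -/
lemma exists_orthogonal {m : ℕ} (a b : Fin m) (hab : a ≠ b) (η : Fin m → ℝ) :
    ∃ f : Fin m → ℝ, 0 < ∑ j, f j ^ 2 ∧ ∑ j, η j * f j = 0 := by
  have pos : ∀ (f : Fin m → ℝ) (i : Fin m), f i ≠ 0 → 0 < ∑ j, f j ^ 2 := fun f i hi =>
    Finset.sum_pos' (fun j _ => sq_nonneg _) ⟨i, Finset.mem_univ _, by positivity⟩
  by_cases h : η a = 0
  · exact ⟨Pi.single a 1, pos _ a (by simp), by simp [Pi.single_apply, h]⟩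
  · refine ⟨Pi.single a (η b) - Pi.single b (η a), pos _ b ?_, ?_⟩
    · simpa [Pi.single_apply, hab.symm] using h
    · simp [Pi.single_apply, mul_sub, Finset.sum_sub_distrib, mul_comm]

/-- algebraic core of the ellipticity of `A_F` at fiber infinity.
If `(β⁰, β', φ)` is annihilated by the symbol of `δ_F` (i.e. `ξ β⁰ + η·β' = 0`)
and `S̃ β⁰ + Ŷ·β' + φ = 0` for all admissible `(S̃, Ŷ)` on the orthogonal
equatorial sphere of `ζ = (ξ, η) ≠ 0` with `|S̃| < δ`, then `β⁰ = 0`, `β' = 0`,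
`φ = 0`. -/
theorem stmt_0 (n : ℕ) (hn : 3 ≤ n) (ξ : ℝ) (η : Fin (n - 1) → ℝ)
    (hζ : ¬(ξ = 0 ∧ η = 0)) (δ : ℝ) (hδ : 0 < δ)
    (β0 φ : ℂ) (β' : Fin (n - 1) → ℂ)
    (hker : (ξ : ℂ) * β0 + ∑ j, (η j : ℂ) * β' j = 0)
    (hvan : ∀ (S : ℝ) (Y : Fin (n - 1) → ℝ),
      (∑ j, Y j ^ 2) = 1 →
      ξ * S + (∑ j, η j * Y j) = 0 →
      |S| < δ →
      (S : ℂ) * β0 + (∑ j, (Y j : ℂ) * β' j) + φ = 0) :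
    β0 = 0 ∧ β' = 0 ∧ φ = 0 := by
  obtain ⟨f, hf, hηf⟩ := exists_orthogonal (⟨0, by omega⟩ : Fin (n - 1)) ⟨1, by omega⟩
    (by simp) η
  -- The hypothesis rescaled from unit vectors `Y` to all nonzero `Y`.
  have hom : ∀ (S : ℝ) (Y : Fin (n - 1) → ℝ), 0 < ∑ j, Y j ^ 2 →
      ξ * S + (∑ j, η j * Y j) = 0 → S ^ 2 < δ ^ 2 * ∑ j, Y j ^ 2 →
      (S : ℂ) * β0 + (∑ j, (Y j : ℂ) * β' j)
        + ((Real.sqrt (∑ j, Y j ^ 2) : ℝ) : ℂ) * φ = 0 := by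
    intro S Y hY horth hS
    obtain ⟨r, hr⟩ : ∃ r, r = Real.sqrt (∑ j, Y j ^ 2) := ⟨_, rfl⟩
    have hr0 : 0 < r := hr ▸ Real.sqrt_pos.2 hY
    have hr2 : ∑ j, Y j ^ 2 = r ^ 2 := by rw [hr, Real.sq_sqrt hY.le]
    rw [← hr]
    have key := hvan (r⁻¹ * S) (fun j => r⁻¹ * Y j) ?_ ?_ ?_
    · have hrc : (r : ℂ) ≠ 0 := by exact_mod_cast hr0.ne'
      have h2 : (r : ℂ) * (((r⁻¹ * S : ℝ) : ℂ) * β0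
          + (∑ j, ((r⁻¹ * Y j : ℝ) : ℂ) * β' j) + φ) = 0 := by rw [key, mul_zero]
      rw [← h2]
      push_cast
      simp only [mul_assoc, ← Finset.mul_sum]
      field_simp
    · simp only [mul_pow, ← Finset.mul_sum, hr2]
      field_simp
    · have : ∀ j, η j * (r⁻¹ * Y j) = r⁻¹ * (η j * Y j) := fun j => by ring
      simp only [this, ← Finset.mul_sum]
      linear_combination r⁻¹ * horth
    · rw [abs_mul, abs_of_pos (inv_pos.2 hr0), inv_mul_lt_iff₀ hr0]
      rw [hr2] at hS
      exact abs_lt_of_sq_lt_sq (by nlinarith) (by positivity)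
  have hf1 := hom 0 f hf (by simpa using hηf)
    (by rw [zero_pow two_ne_zero]; positivity)
  have hf2 := hom 0 (fun j => - f j) (by simpa using hf) (by simpa using hηf)
    (by simp only [neg_sq]; rw [zero_pow two_ne_zero]; positivity)
  simp only [neg_sq, Complex.ofReal_neg, neg_mul, Finset.sum_neg_distrib, Complex.ofReal_zero,
    zero_mul, zero_add] at hf1 hf2
  have hφ : φ = 0 := by
    have hs : ((Real.sqrt (∑ j, f j ^ 2) : ℝ) : ℂ) ≠ 0 := by
      exact_mod_cast (Real.sqrt_pos.2 hf).ne'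
    have : ((Real.sqrt (∑ j, f j ^ 2) : ℝ) : ℂ) * φ = 0 := by
      linear_combination (hf1 + hf2) / 2
    exact (mul_eq_zero.1 this).resolve_left hs
  subst hφ
  simp only [mul_zero, add_zero] at hf1 hom
  have perp : ∀ (S : ℝ) (Y : Fin (n - 1) → ℝ), ξ * S + (∑ j, η j * Y j) = 0 →
      (S : ℂ) * β0 + (∑ j, (Y j : ℂ) * β' j) = 0 := by
    intro S Y horth
    have c1 : ∀ᶠ t : ℝ in nhds 0, 0 < ∑ j, (f j + t * Y j) ^ 2 :=
      (Continuous.tendsto (by fun_prop) 0).eventually_const_lt (by simpa using hf)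
    have c2 : ∀ᶠ t : ℝ in nhds 0, 0 < δ ^ 2 * ∑ j, (f j + t * Y j) ^ 2 - (t * S) ^ 2 := by
      refine (Continuous.tendsto (by fun_prop) 0).eventually_const_lt ?_
      simp only [zero_mul, add_zero]
      have := mul_pos (pow_pos hδ 2) hf
      linarith
    obtain ⟨t, ⟨h1, h2⟩, ht⟩ := (((c1.and c2).filter_mono nhdsWithin_le_nhds).and
      (self_mem_nhdsWithin : {(0 : ℝ)}ᶜ ∈ nhdsWithin 0 {(0 : ℝ)}ᶜ)).exists
    have htc : (t : ℂ) ≠ 0 := by exact_mod_cast ht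
    have h3 := hom (t * S) (fun j => f j + t * Y j) h1 ?_ (by linarith)
    · push_cast at h3
      simp only [add_mul, Finset.sum_add_distrib, hf1, mul_assoc, ← Finset.mul_sum] at h3
      refine (mul_eq_zero.1 (?_ : (t : ℂ) * _ = 0)).resolve_left htc
      linear_combination h3
    · have : ∀ j, η j * (f j + t * Y j) = η j * f j + t * (η j * Y j) := fun j => by ring
      simp only [this, Finset.sum_add_distrib, hηf, ← Finset.mul_sum]
      linear_combination t * horth
  obtain ⟨N, hN⟩ : ∃ N : ℝ, N = ξ ^ 2 + ∑ j, η j ^ 2 := ⟨_, rfl⟩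
  have hN0 : N ≠ 0 := by
    intro h0
    have hs : 0 ≤ ∑ j, η j ^ 2 := Finset.sum_nonneg fun j _ => sq_nonneg _
    have hx : ξ ^ 2 = 0 := by nlinarith [sq_nonneg ξ]
    have hy : ∑ j, η j ^ 2 = 0 := by nlinarith [sq_nonneg ξ]
    rw [Finset.sum_eq_zero_iff_of_nonneg (fun j _ => sq_nonneg _)] at hy
    exact hζ ⟨by simpa using hx, funext fun j => by simpa using hy j (Finset.mem_univ _)⟩
  have hNc : (N : ℂ) ≠ 0 := by exact_mod_cast hN0
  -- For `v = (S, Y)` the vector `|ζ|² v - (ζ·v) ζ` is orthogonal to `ζ`.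
  have all : ∀ (S : ℝ) (Y : Fin (n - 1) → ℝ),
      (S : ℂ) * β0 + (∑ j, (Y j : ℂ) * β' j) = 0 := by
    intro S Y
    obtain ⟨c, hc⟩ : ∃ c : ℝ, c = ξ * S + ∑ j, η j * Y j := ⟨_, rfl⟩
    have h := perp (N * S - c * ξ) (fun j => N * Y j - c * η j) ?_
    · push_cast at h
      simp only [sub_mul, Finset.sum_sub_distrib, mul_assoc, ← Finset.mul_sum] at h
      refine (mul_eq_zero.1 (?_ : (N : ℂ) * _ = 0)).resolve_left hNc
      linear_combination h + (c : ℂ) * hker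
    · have : ∀ j, η j * (N * Y j - c * η j) = N * (η j * Y j) - c * η j ^ 2 := fun j => by ring
      simp only [this, Finset.sum_sub_distrib, ← Finset.mul_sum]
      linear_combination c * hN - N * hc
  refine ⟨by simpa using all 1 0, funext fun i => ?_, rfl⟩
  simpa [Pi.single_apply, apply_ite, ite_mul] using all 0 (Pi.single i 1)
end

section
/- Let n ≥ 3, F > 0, ξ ∈ ℝ and η ∈ ℝ^{n-1}. Suppose β⁰ ∈ ℂ, β' ∈ ℂ^{n-1} and φ ∈ ℂ satisfy (ξ − iF)·β⁰ + η·β' = 0, and suppose that for every unit vector Ŷ ∈ ℝ^{n-1} one has −((ξ − iF)(Ŷ·η)/(ξ² + F²))·β⁰ + Ŷ·β' + φ = 0. Then β⁰ = 0, β' = 0 and φ = 0. -/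
/-! Testing the vanishing condition on the coordinate vectors `Y = ±eⱼ` separates its even and
odd parts in `Y`: the even part gives `φ = 0`, the odd part `β'ⱼ = (ξ - iF) ηⱼ β⁰ / (ξ² + F²)`.
Inserting this into the kernel condition yields `(ξ - iF) (ξ² + F² + |η|²) β⁰ = 0`, where both
scalar factors are nonzero because `F > 0`; hence `β⁰ = 0`, and then `β' = 0`. -/

open scoped BigOperators

/-- algebraic core of the ellipticity of `A_F` at finite points of
the scattering cotangent bundle. If `(ξ - iF) β⁰ + η·β' = 0` and
`-((ξ - iF)(Ŷ·η)/(ξ² + F²)) β⁰ + Ŷ·β' + φ = 0` for every unit vector `Ŷ`, then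
`β⁰ = 0`, `β' = 0`, `φ = 0`. -/
theorem stmt_2 (n : ℕ) (hn : 3 ≤ n) (F : ℝ) (hF : 0 < F) (ξ : ℝ)
    (η : Fin (n - 1) → ℝ) (β0 φ : ℂ) (β' : Fin (n - 1) → ℂ)
    (hker : ((ξ : ℂ) - Complex.I * F) * β0 + ∑ j, (η j : ℂ) * β' j = 0)
    (hvan : ∀ Y : Fin (n - 1) → ℝ, (∑ j, Y j ^ 2) = 1 →
      -(((ξ : ℂ) - Complex.I * F) * (((∑ j, Y j * η j : ℝ)) : ℂ)
          / ((ξ ^ 2 + F ^ 2 : ℝ) : ℂ)) * β0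
        + (∑ j, (Y j : ℂ) * β' j) + φ = 0) :
    β0 = 0 ∧ β' = 0 ∧ φ = 0 := by
  have hD : (0 : ℝ) < ξ ^ 2 + F ^ 2 := by positivity
  have hDc : ((ξ ^ 2 + F ^ 2 : ℝ) : ℂ) ≠ 0 := Complex.ofReal_ne_zero.mpr hD.ne'
  have hz : (ξ : ℂ) - Complex.I * F ≠ 0 := by
    intro h
    have him := congrArg Complex.im h
    simp at him
    exact hF.ne' him
  have hplus : ∀ j, -(((ξ : ℂ) - Complex.I * F) * (η j : ℂ) / ((ξ ^ 2 + F ^ 2 : ℝ) : ℂ)) * β0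
      + β' j + φ = 0 := by
    intro j
    have h := hvan (Pi.single j 1) (by simp [Pi.single_apply])
    simpa [Pi.single_apply, apply_ite Complex.ofReal] using h
  have hminus : ∀ j, (((ξ : ℂ) - Complex.I * F) * (η j : ℂ) / ((ξ ^ 2 + F ^ 2 : ℝ) : ℂ)) * β0
      - β' j + φ = 0 := by
    intro j
    have h := hvan (fun k => -(Pi.single j 1 : Fin (n - 1) → ℝ) k) (by simp [Pi.single_apply])
    simp [Pi.single_apply, neg_div, apply_ite Complex.ofReal] at h
    push_cast
    linear_combination h
  have hφ : φ = 0 := by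
    have hj : 0 < n - 1 := by omega
    linear_combination (hplus ⟨0, hj⟩ + hminus ⟨0, hj⟩) / 2
  have hβ : ∀ j, β' j = ((ξ : ℂ) - Complex.I * F) * (η j : ℂ) / ((ξ ^ 2 + F ^ 2 : ℝ) : ℂ) * β0 :=
    fun j => by linear_combination (hplus j - hminus j) / 2
  have hsum : ∑ j, (η j : ℂ) * β' j
      = ((ξ : ℂ) - Complex.I * F) * β0 * ((∑ j, η j ^ 2 : ℝ) : ℂ) / ((ξ ^ 2 + F ^ 2 : ℝ) : ℂ) := by
    rw [Complex.ofReal_sum, Finset.mul_sum, Finset.sum_div]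
    refine Finset.sum_congr rfl fun j _ => ?_
    rw [hβ j, Complex.ofReal_pow]
    ring
  have hpos : (0 : ℝ) < (ξ ^ 2 + F ^ 2) + ∑ j, η j ^ 2 :=
    add_pos_of_pos_of_nonneg hD (Finset.sum_nonneg fun j _ => sq_nonneg _)
  have hprod : ((ξ : ℂ) - Complex.I * F) * β0
      * (((ξ ^ 2 + F ^ 2) + ∑ j, η j ^ 2 : ℝ) : ℂ) = 0 := by
    rw [hsum] at hker
    rw [Complex.ofReal_add]
    generalize ((ξ ^ 2 + F ^ 2 : ℝ) : ℂ) = D at hker hDc ⊢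
    field_simp at hker
    linear_combination hker
  have hβ0 : β0 = 0 := by
    rcases mul_eq_zero.mp hprod with h | h
    · exact (mul_eq_zero.mp h).resolve_left hz
    · exact absurd h (Complex.ofReal_ne_zero.mpr hpos.ne')
  refine ⟨hβ0, funext fun j => ?_, hφ⟩
  rw [hβ j, hβ0, mul_zero, Pi.zero_apply]
end

section
/- Let n ≥ 3, F > 0, ξ ∈ ℝ, η ∈ ℝ^{n-1}, and let μ : S^{n-2} → ℝ be a continuous strictly positive function on the unit sphere S^{n-2} ⊂ ℝ^{n-1}. Suppose β⁰ ∈ ℂ, β' ∈ ℂ^{n-1} and φ ∈ ℂ satisfy (ξ − iF)·β⁰ + η·β' = 0 and (β⁰, β', φ) ≠ 0. Then ∫_{S^{n-2}} | −((ξ − iF)(Ŷ·η)/(ξ² + F²))·β⁰ + Ŷ·β' + φ |² · exp( −(Ŷ·η)² / (2 μ(Ŷ)(ξ² + F²)) ) dσ(Ŷ) > 0, where dσ is the spherical (surface) measure on S^{n-2}. -/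
/-!
The integrand is continuous and nonnegative and the surface measure charges every nonempty open
subset of the sphere, so the integral is positive as soon as the integrand is nonzero somewhere.
The exponential never vanishes, so otherwise the amplitude
`-((ξ - iF)(Ŷ·η)/(ξ² + F²)) β⁰ + Ŷ·β' + φ` vanishes on the whole sphere. Comparing its values at
`±eⱼ` separates the even part `φ = 0` from the odd part
`β'ⱼ = (ξ - iF) ηⱼ β⁰ / (ξ² + F²)`. Inserting the latter in the kernel condition gives
`(ξ - iF) (ξ² + F² + |η|²) β⁰ = 0`, and `F > 0` forces `β⁰ = 0`, hence `β' = 0`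
(`amplitude_injective`).
-/

open scoped BigOperators
open MeasureTheory

/-- A pair in the kernel of the symbol of the divergence whose amplitude vanishes on the unit sphere
is zero. -/
lemma amplitude_injective {m : ℕ} (hm : 0 < m) {F : ℝ} (hF : 0 < F) (ξ : ℝ) (η : Fin m → ℝ)
    (β0 φ : ℂ) (β' : Fin m → ℂ)
    (hker : ((ξ : ℂ) - Complex.I * F) * β0 + ∑ j, (η j : ℂ) * β' j = 0)
    (h : ∀ Y : Metric.sphere (0 : EuclideanSpace ℝ (Fin m)) 1,
      -(((ξ : ℂ) - Complex.I * F)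
              * (((∑ j, (Y : EuclideanSpace ℝ (Fin m)) j * η j : ℝ)) : ℂ)
              / ((ξ ^ 2 + F ^ 2 : ℝ) : ℂ)) * β0
            + (∑ j, ((Y : EuclideanSpace ℝ (Fin m)) j : ℂ) * β' j) + φ = 0) :
    β0 = 0 ∧ β' = 0 ∧ φ = 0 := by
  have hR : 0 < ξ ^ 2 + F ^ 2 := by positivity
  have hRC : ((ξ ^ 2 + F ^ 2 : ℝ) : ℂ) ≠ 0 := by exact_mod_cast hR.ne'
  have hz : (ξ : ℂ) - Complex.I * F ≠ 0 := by
    intro h0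
    have := congrArg Complex.im h0
    simp at this
    exact hF.ne' this
  have hval (j : Fin m) (c : ℝ) (hc : ‖c‖ = 1) :
      -(((ξ : ℂ) - Complex.I * F) * ((c * η j : ℝ) : ℂ) / ((ξ ^ 2 + F ^ 2 : ℝ) : ℂ)) * β0
        + (c : ℂ) * β' j + φ = 0 := by
    have := h ⟨EuclideanSpace.single j c, by simpa using hc⟩
    have e1 : ∑ k, (EuclideanSpace.single j c : EuclideanSpace ℝ (Fin m)) k * η k = c * η j := by
      rw [Finset.sum_eq_single j] <;> simp +contextual
    have e2 : ∑ k, ((EuclideanSpace.single j c : EuclideanSpace ℝ (Fin m)) k : ℂ) * β' k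
        = (c : ℂ) * β' j := by
      rw [Finset.sum_eq_single j] <;> simp +contextual
    rwa [e1, e2] at this
  have hp (j : Fin m) := hval j 1 (by simp)
  have hn (j : Fin m) := hval j (-1) (by simp)
  have hφ : φ = 0 := by
    have h1 := hp ⟨0, hm⟩
    have h2 := hn ⟨0, hm⟩
    push_cast at h1 h2
    linear_combination (h1 + h2) / 2
  have hβ (j : Fin m) :
      β' j = ((ξ : ℂ) - Complex.I * F) * β0 / ((ξ ^ 2 + F ^ 2 : ℝ) : ℂ) * η j := by
    have h1 := hp j
    rw [hφ] at h1
    push_cast at h1 ⊢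
    linear_combination h1
  have hsum : ∑ j, (η j : ℂ) * β' j
      = ((ξ : ℂ) - Complex.I * F) * β0 / ((ξ ^ 2 + F ^ 2 : ℝ) : ℂ) * ((∑ j, η j ^ 2 : ℝ) : ℂ) := by
    push_cast
    rw [Finset.mul_sum]
    refine Finset.sum_congr rfl fun j _ => ?_
    rw [hβ j]
    push_cast
    ring
  have hS : 0 ≤ ∑ j, η j ^ 2 := Finset.sum_nonneg fun j _ => sq_nonneg _
  have hRS : ((ξ ^ 2 + F ^ 2 + ∑ j, η j ^ 2 : ℝ) : ℂ) ≠ 0 := by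
    exact_mod_cast (add_pos_of_pos_of_nonneg hR hS).ne'
  have hβ0 : β0 = 0 := by
    rw [hsum] at hker
    have hprod : (((ξ : ℂ) - Complex.I * F) * ((ξ ^ 2 + F ^ 2 + ∑ j, η j ^ 2 : ℝ) : ℂ)) * β0
        = 0 := by
      rw [Complex.ofReal_add]
      generalize ((ξ ^ 2 + F ^ 2 : ℝ) : ℂ) = R at *
      field_simp at hker
      linear_combination hker
    exact (mul_eq_zero.1 hprod).resolve_left (mul_ne_zero hz hRS)
  refine ⟨hβ0, ?_, hφ⟩
  ext j
  rw [hβ j, hβ0]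
  simp

/-- the quadratic form of the scattering principal symbol of `A_F`
(with Gaussian cutoff) is strictly positive on nonzero pairs `(β⁰, β', φ)` in
the kernel of the scattering principal symbol of `δ_F`: the integral over the
unit sphere `S^{n-2}` (with its surface measure, realized as
`volume.toSphere`) of
`| -((ξ - iF)(Ŷ·η)/(ξ² + F²)) β⁰ + Ŷ·β' + φ |² e^{-(Ŷ·η)²/(2 μ(Ŷ)(ξ² + F²))}`
is positive. -/
theorem stmt_3 (n : ℕ) (hn : 3 ≤ n) (F : ℝ) (hF : 0 < F) (ξ : ℝ)
    (η : Fin (n - 1) → ℝ)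
    (μ : Metric.sphere (0 : EuclideanSpace ℝ (Fin (n - 1))) 1 → ℝ)
    (hμc : Continuous μ) (hμpos : ∀ Y, 0 < μ Y)
    (β0 φ : ℂ) (β' : Fin (n - 1) → ℂ)
    (hker : ((ξ : ℂ) - Complex.I * F) * β0 + ∑ j, (η j : ℂ) * β' j = 0)
    (hne : ¬(β0 = 0 ∧ β' = 0 ∧ φ = 0)) :
    0 < ∫ Y : Metric.sphere (0 : EuclideanSpace ℝ (Fin (n - 1))) 1,
        ‖-(((ξ : ℂ) - Complex.I * F)
              * (((∑ j, (Y : EuclideanSpace ℝ (Fin (n - 1))) j * η j : ℝ)) : ℂ)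
              / ((ξ ^ 2 + F ^ 2 : ℝ) : ℂ)) * β0
            + (∑ j, ((Y : EuclideanSpace ℝ (Fin (n - 1))) j : ℂ) * β' j) + φ‖ ^ 2
          * Real.exp (-(∑ j, (Y : EuclideanSpace ℝ (Fin (n - 1))) j * η j) ^ 2
              / (2 * μ Y * (ξ ^ 2 + F ^ 2)))
        ∂((volume : Measure (EuclideanSpace ℝ (Fin (n - 1)))).toSphere) := by
  have hR : 0 < ξ ^ 2 + F ^ 2 := by positivity
  obtain ⟨Y, hY⟩ := not_forall.1
    (mt (amplitude_injective (by omega) hF ξ η β0 φ β' hker) hne)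
  refine Continuous.integral_pos_of_hasCompactSupport_nonneg_nonzero (x := Y) ?_
    (HasCompactSupport.of_compactSpace _) (fun Y => by positivity) ?_
  · have hden (Y) : 2 * μ Y * (ξ ^ 2 + F ^ 2) ≠ 0 := by
      have := hμpos Y
      positivity
    fun_prop (disch := exact hden _)
  · exact mul_ne_zero (pow_ne_zero 2 (norm_ne_zero_iff.2 hY)) (Real.exp_ne_zero _)
end

section
/- Let n ≥ 3, let ζ = (ξ, η) ∈ ℝ × ℝ^{n-1} be nonzero, and let δ > 0. Suppose h_xx ∈ ℂ, h_xy ∈ ℂ^{n-1}, h_yy a symmetric (n−1)×(n−1) complex matrix, β_x ∈ ℂ and β_y ∈ ℂ^{n-1} satisfy the three kernel conditions: (i) ξ·h_xx + η·h_xy = 0; (ii) ξ·h_xy + h_yy η = 0 (componentwise, ξ(h_xy)ⱼ + Σ_k η_k (h_yy)_{kj} = 0); (iii) ξ·β_x + η·β_y = 0. Suppose moreover that for every S̃ ∈ ℝ and every unit vector Ŷ ∈ ℝ^{n-1} with ξ·S̃ + η·Ŷ = 0 and |S̃| < δ one has S̃²·h_xx + 2 S̃ (Ŷ·h_xy) +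 Ŷᵀ h_yy Ŷ + S̃·β_x + Ŷ·β_y = 0. Then h_xx = 0, h_xy = 0, h_yy = 0, β_x = 0 and β_y = 0. -/
/-!
The data are assembled into a symmetric matrix `H` and a covector `b` on `ℝ × ℝ^{n-1}`, indexed by
`Option (Fin (n - 1))` with `none` the `x`-slot. The vanishing hypothesis holds at `v = (S, Y)` and
at `-v`, so the quadratic part `vᵀ H v` and the linear part `b · v` vanish separately, and by
homogeneity they vanish on the cone `|S| < δ |Y|` in `ζ^⊥`. As `n - 1 ≥ 2`, this relatively open
cone contains some `v₀ = (0, Y₀)` with `Y₀ ≠ 0`; a quadratic form and a linear form vanishing near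
a point of `ζ^⊥` vanish on all of `ζ^⊥`. The kernel conditions say `H ζ = 0` and `b · ζ = 0`, so
the two forms vanish on `ζ^⊥ ⊕ ℝ ζ`, the whole space, and polarization gives `H = 0`, `b = 0`
(`eq_zero_of_vanish_near`).
-/

open scoped BigOperators
open Matrix

/-- The complexification of a real vector. -/
def cvec {ι : Type*} (v : ι → ℝ) : ι → ℂ := fun i => (v i : ℂ)

lemma cvec_add {ι : Type*} (v w : ι → ℝ) : cvec (v + w) = cvec v + cvec w := by
  ext i; simp [cvec]

lemma cvec_smul {ι : Type*} (t : ℝ) (v : ι → ℝ) : cvec (t • v) = (t : ℂ) • cvec v := by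
  ext i; simp [cvec]

lemma cvec_single {ι : Type*} [DecidableEq ι] (i : ι) :
    cvec (Pi.single i (1 : ℝ)) = Pi.single i (1 : ℂ) := by
  ext j
  by_cases h : j = i
  · subst h; simp [cvec]
  · simp [cvec, h]

lemma dotProduct_mulVec_comm_of_isSymm {ι : Type*} [Fintype ι] {H : Matrix ι ι ℂ}
    (hH : H.IsSymm) (u v : ι → ℂ) : u ⬝ᵥ H *ᵥ v = v ⬝ᵥ H *ᵥ u := by
  rw [dotProduct_mulVec, ← mulVec_transpose, hH.eq, dotProduct_comm]

lemma quad_add_smul {ι : Type*} [Fintype ι] {H : Matrix ι ι ℂ}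
    (hH : H.IsSymm) (u v : ι → ℂ) (t : ℂ) :
    (u + t • v) ⬝ᵥ H *ᵥ (u + t • v)
      = u ⬝ᵥ H *ᵥ u + 2 * t * (u ⬝ᵥ H *ᵥ v) + t ^ 2 * (v ⬝ᵥ H *ᵥ v) := by
  simp only [mulVec_add, mulVec_smul, dotProduct_add, add_dotProduct, smul_dotProduct,
    dotProduct_smul, smul_eq_mul]
  rw [dotProduct_mulVec_comm_of_isSymm hH v u]
  ring

/-- A quadratic and a linear form that annihilate `ζ`, and vanish near a point `v₀` along every
direction of `ζ^⊥`, are zero. -/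
lemma eq_zero_of_vanish_near {ι : Type*} [Fintype ι] [DecidableEq ι]
    {H : Matrix ι ι ℂ} (hH : H.IsSymm) (b : ι → ℂ) (ζ v₀ : ι → ℝ) (hζ : ζ ≠ 0)
    (hHζ : H *ᵥ cvec ζ = 0) (hbζ : b ⬝ᵥ cvec ζ = 0)
    (hloc : ∀ w : ι → ℝ, ζ ⬝ᵥ w = 0 → ∃ ε > 0, ∀ t : ℝ, |t| < ε →
      cvec (v₀ + t • w) ⬝ᵥ H *ᵥ cvec (v₀ + t • w) = 0 ∧ b ⬝ᵥ cvec (v₀ + t • w) = 0) :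
    H = 0 ∧ b = 0 := by
  have hperp : ∀ w : ι → ℝ, ζ ⬝ᵥ w = 0 →
      cvec w ⬝ᵥ H *ᵥ cvec w = 0 ∧ b ⬝ᵥ cvec w = 0 := by
    intro w hw
    obtain ⟨ε, hε, h⟩ := hloc w hw
    have h0 := h 0 (by simpa using hε)
    have h1 := h (ε / 2) (by rw [abs_of_pos (by positivity)]; linarith)
    have h2 := h (-(ε / 2)) (by rw [abs_neg, abs_of_pos (by positivity)]; linarith)
    simp only [cvec_add, cvec_smul, quad_add_smul hH, dotProduct_add, dotProduct_smul,
      smul_eq_mul] at h0 h1 h2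
    push_cast at h0 h1 h2
    have hε' : (ε : ℂ) ≠ 0 := by exact_mod_cast hε.ne'
    constructor
    · have : (ε : ℂ) ^ 2 * (cvec w ⬝ᵥ H *ᵥ cvec w) = 0 := by
        linear_combination 2 * h1.1 + 2 * h2.1 - 4 * h0.1
      simpa [hε'] using this
    · have : (ε : ℂ) * (b ⬝ᵥ cvec w) = 0 := by
        linear_combination h1.2 - h2.2
      simpa [hε'] using this
  have hall : ∀ v : ι → ℝ, cvec v ⬝ᵥ H *ᵥ cvec v = 0 ∧ b ⬝ᵥ cvec v = 0 := by
    intro v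
    have hζζ : ζ ⬝ᵥ ζ ≠ 0 := fun h => hζ (dotProduct_self_eq_zero.mp h)
    -- the argument of `hperp` is the orthogonal projection of `v` to `ζ^⊥`
    have hw := hperp (v + (-(ζ ⬝ᵥ v / ζ ⬝ᵥ ζ)) • ζ) (by
      rw [dotProduct_add, dotProduct_smul, smul_eq_mul]
      field_simp
      ring)
    simp only [cvec_add, cvec_smul, quad_add_smul hH, dotProduct_add, dotProduct_smul, hHζ,
      hbζ] at hw
    simpa using hw
  constructor
  · ext i j
    have h1 := (hall (Pi.single i 1)).1
    have h2 := (hall (Pi.single j 1)).1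
    have h3 := (hall (Pi.single i 1 + (1 : ℝ) • Pi.single j 1)).1
    rw [cvec_add, cvec_smul, quad_add_smul hH, h1, h2] at h3
    simpa [cvec_single] using h3
  · ext i
    simpa [cvec_single] using (hall (Pi.single i 1)).2

/-- algebraic core of the ellipticity of `B_F` at fiber infinity.
If `(h_xx, h_xy, h_yy, β_x, β_y)` lies in the kernel of the standard principal
symbol of `δ^s_F` (conditions (i)-(iii)) and
`S̃² h_xx + 2 S̃ (Ŷ·h_xy) + Ŷᵀ h_yy Ŷ + S̃ β_x + Ŷ·β_y = 0` for all admissible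
`(S̃, Ŷ)` on the orthogonal equatorial sphere of `ζ = (ξ, η) ≠ 0` with
`|S̃| < δ`, then all components vanish. -/
theorem stmt_4 (n : ℕ) (hn : 3 ≤ n) (ξ : ℝ) (η : Fin (n - 1) → ℝ)
    (hζ : ¬(ξ = 0 ∧ η = 0)) (δ : ℝ) (hδ : 0 < δ)
    (hxx : ℂ) (hxy : Fin (n - 1) → ℂ)
    (hyy : Matrix (Fin (n - 1)) (Fin (n - 1)) ℂ) (hsymm : hyy.IsSymm)
    (βx : ℂ) (βy : Fin (n - 1) → ℂ)
    (hker1 : (ξ : ℂ) * hxx + (∑ j, (η j : ℂ) * hxy j) = 0)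
    (hker2 : ∀ j, (ξ : ℂ) * hxy j + (∑ k, (η k : ℂ) * hyy k j) = 0)
    (hker3 : (ξ : ℂ) * βx + (∑ j, (η j : ℂ) * βy j) = 0)
    (hvan : ∀ (S : ℝ) (Y : Fin (n - 1) → ℝ),
      (∑ j, Y j ^ 2) = 1 →
      ξ * S + (∑ j, η j * Y j) = 0 →
      |S| < δ →
      (S : ℂ) ^ 2 * hxx + 2 * (S : ℂ) * (∑ j, (Y j : ℂ) * hxy j)
        + (∑ j, ∑ k, (Y j : ℂ) * hyy j k * (Y k : ℂ))
        + (S : ℂ) * βx + (∑ j, (Y j : ℂ) * βy j) = 0) :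
    hxx = 0 ∧ hxy = 0 ∧ hyy = 0 ∧ βx = 0 ∧ βy = 0 := by
  have hexp : ∀ S : ℝ, ∀ Y : Fin (n - 1) → ℝ, ξ * S + (∑ j, η j * Y j) = 0 →
      |S| < δ * √(∑ j, Y j ^ 2) →
      (S : ℂ) ^ 2 * hxx + 2 * (S : ℂ) * (∑ j, (Y j : ℂ) * hxy j)
        + (∑ j, ∑ k, (Y j : ℂ) * hyy j k * (Y k : ℂ)) = 0 ∧
      (S : ℂ) * βx + (∑ j, (Y j : ℂ) * βy j) = 0 := by
    intro S Y hperp hcone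
    set r := √(∑ j, Y j ^ 2) with hr
    have hrpos : 0 < r := by
      by_contra hneg
      have : δ * r ≤ 0 := mul_nonpos_of_nonneg_of_nonpos hδ.le (not_lt.mp hneg)
      linarith [abs_nonneg S]
    have hr2 : ∑ j, Y j ^ 2 = r ^ 2 := by
      rw [hr, Real.sq_sqrt (Finset.sum_nonneg fun j _ => sq_nonneg (Y j))]
    -- both normalizations `±r⁻¹ (S, Y)` are admissible
    have key : ∀ c : ℝ, c ^ 2 * r ^ 2 = 1 → |c| = r⁻¹ →
        (c : ℂ) ^ 2 * ((S : ℂ) ^ 2 * hxx + 2 * (S : ℂ) * (∑ j, (Y j : ℂ) * hxy j)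
          + (∑ j, ∑ k, (Y j : ℂ) * hyy j k * (Y k : ℂ)))
          + (c : ℂ) * ((S : ℂ) * βx + (∑ j, (Y j : ℂ) * βy j)) = 0 := by
      intro c hc hca
      have h := hvan (c * S) (fun j => c * Y j)
        (by simp only [mul_pow, ← Finset.mul_sum]; rw [hr2, hc])
        (by
          have : ∑ j, η j * (c * Y j) = c * ∑ j, η j * Y j := by
            rw [Finset.mul_sum]; exact Finset.sum_congr rfl fun j _ => by ring
          rw [this]; linear_combination c * hperp)
        (by
          rw [abs_mul, hca, inv_mul_lt_iff₀ hrpos]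
          linarith)
      have e1 : ∑ j, ((c * Y j : ℝ) : ℂ) * hxy j = c * ∑ j, (Y j : ℂ) * hxy j := by
        rw [Finset.mul_sum]; exact Finset.sum_congr rfl fun j _ => by push_cast; ring
      have e2 : ∑ j, ((c * Y j : ℝ) : ℂ) * βy j = c * ∑ j, (Y j : ℂ) * βy j := by
        rw [Finset.mul_sum]; exact Finset.sum_congr rfl fun j _ => by push_cast; ring
      have e3 : ∑ j, ∑ k, ((c * Y j : ℝ) : ℂ) * hyy j k * ((c * Y k : ℝ) : ℂ)
          = c ^ 2 * ∑ j, ∑ k, (Y j : ℂ) * hyy j k * (Y k : ℂ) := by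
        simp only [Finset.mul_sum]
        exact Finset.sum_congr rfl fun j _ => Finset.sum_congr rfl fun k _ => by
          push_cast; ring
      simp only [e1, e2, e3] at h
      push_cast at h
      linear_combination h
    have hp := key r⁻¹ (by field_simp) (abs_of_pos (by positivity))
    have hm := key (-r⁻¹) (by field_simp) (by rw [abs_neg, abs_of_pos (by positivity)])
    have hrc : (r : ℂ) ≠ 0 := by exact_mod_cast hrpos.ne'
    push_cast at hp hm
    constructor
    · refine (mul_eq_zero.mp (?_ : ((r : ℂ)⁻¹) ^ 2 * _ = 0)).resolve_left
        (pow_ne_zero 2 (inv_ne_zero hrc))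
      linear_combination (hp + hm) / 2
    · refine (mul_eq_zero.mp (?_ : (r : ℂ)⁻¹ * _ = 0)).resolve_left (inv_ne_zero hrc)
      linear_combination (hp - hm) / 2
  obtain ⟨Y₀, hY₀, hηY₀⟩ : ∃ Y₀ : Fin (n - 1) → ℝ, Y₀ ≠ 0 ∧ η ⬝ᵥ Y₀ = 0 := by
    have : Nontrivial (Fin (n - 1)) := Fin.nontrivial_iff_two_le.mpr (by omega)
    obtain ⟨Y₀, hY₀, h⟩ := exists_ne_zero_dotProduct_eq_zero η
    exact ⟨Y₀, hY₀, by rwa [dotProduct_comm]⟩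
  let H : Matrix (Option (Fin (n - 1))) (Option (Fin (n - 1))) ℂ := Matrix.of fun i j =>
    i.elim (j.elim hxx hxy) fun i' => j.elim (hxy i') (hyy i')
  let b : Option (Fin (n - 1)) → ℂ := fun i => i.elim βx βy
  let ζ : Option (Fin (n - 1)) → ℝ := fun i => i.elim ξ η
  let v₀ : Option (Fin (n - 1)) → ℝ := fun i => i.elim 0 Y₀
  have hH : H.IsSymm := by
    ext i j
    cases i <;> cases j <;> simp [H, hsymm.apply]
  have hmain := eq_zero_of_vanish_near hH b ζ v₀
    (fun h => hζ ⟨congrFun h none, funext fun j => congrFun h (some j)⟩)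
    (by
      ext i
      cases i with
      | none =>
        simp only [mulVec, dotProduct, Fintype.sum_option, H, ζ, cvec, Matrix.of_apply,
          Option.elim, Pi.zero_apply]
        rw [← hker1]
        simp only [mul_comm]
      | some i =>
        simp only [mulVec, dotProduct, Fintype.sum_option, H, ζ, cvec, Matrix.of_apply,
          Option.elim, Pi.zero_apply]
        rw [← hker2 i]
        simp only [mul_comm, hsymm.apply i])
    (by
      simp only [dotProduct, Fintype.sum_option, b, ζ, cvec, Option.elim]
      rw [← hker3]
      simp only [mul_comm])
    (by
      intro w hw
      have hpos : 0 < ∑ j, Y₀ j ^ 2 := by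
        obtain ⟨j, hj⟩ := Function.ne_iff.mp hY₀
        exact Finset.sum_pos' (fun j _ => sq_nonneg _)
          ⟨j, Finset.mem_univ _, sq_pos_of_ne_zero hj⟩
      -- the cone condition is open and holds at `t = 0`
      have hopen : ∀ᶠ t : ℝ in nhds 0,
          |t * w none| < δ * √(∑ j, (Y₀ j + t * w (some j)) ^ 2) := by
        refine ContinuousAt.eventually_lt (by fun_prop) (by fun_prop) ?_
        simpa using mul_pos hδ (Real.sqrt_pos.mpr hpos)
      obtain ⟨ε, hε, hball⟩ := Metric.eventually_nhds_iff.mp hopen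
      refine ⟨ε, hε, fun t ht => ?_⟩
      have h := hexp (t * w none) (fun j => Y₀ j + t * w (some j))
        (by
          simp only [dotProduct, Fintype.sum_option, ζ, Option.elim] at hw hηY₀
          have : ∑ j, η j * (Y₀ j + t * w (some j))
              = ∑ j, η j * Y₀ j + t * ∑ j, η j * w (some j) := by
            rw [Finset.mul_sum, ← Finset.sum_add_distrib]
            exact Finset.sum_congr rfl fun j _ => by ring
          rw [this]
          linear_combination hηY₀ + t * hw)
        (hball (by simpa using ht))
      have hcv : cvec (v₀ + t • w) = fun i => i.elim ((t * w none : ℝ) : ℂ)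
          fun j => ((Y₀ j + t * w (some j) : ℝ) : ℂ) := by
        ext i; cases i <;> simp [cvec, v₀]
      rw [hcv]
      simp only [dotProduct, mulVec, Fintype.sum_option, H, b, Matrix.of_apply, Option.elim]
      refine ⟨?_, ?_⟩
      · rw [← h.1]
        simp only [mul_add, Finset.sum_add_distrib, Finset.mul_sum]
        simp only [← Finset.sum_add_distrib, add_assoc]
        congr 1
        · ring
        · refine Finset.sum_congr rfl fun j _ => ?_
          simp only [mul_assoc]
          ring
      · rw [← h.2]
        simp only [mul_comm])
  obtain ⟨hH0, hb0⟩ := hmain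
  refine ⟨congrFun (congrFun hH0 none) none, ?_, ?_, congrFun hb0 none, ?_⟩
  · exact funext fun j => congrFun (congrFun hH0 none) (some j)
  · exact Matrix.ext fun i j => congrFun (congrFun hH0 (some i)) (some j)
  · exact funext fun j => congrFun hb0 (some j)
end

section
/- Let n ≥ 3, let ξ ∈ ℝ and η ∈ ℝ^{n-1} be fixed, let a be a real symmetric (n−1)×(n−1) matrix, let b ∈ ℝ^{n-1}, let α⁻ ∈ ℝ^{n-1}, and let α⁺ be a positive definite real quadratic form on ℝ^{n-1} (given by a positive definite symmetric matrix Q⁺ via α⁺(Ŷ) = Ŷᵀ Q⁺ Ŷ). For F > 0 and a unit vector Ŷ ∈ ℝ^{n-1}, set α(Ŷ) = α⁺(Ŷ) + α⁻·Ŷ, θ₁(Ŷ) = −(ξ − iF)(Ŷ·η)/(ξ² + F²), and θ₂(Ŷ) = θ₁(Ŷ)² + 2i α(Ŷ)(ξ − iF)/(ξ² + F²). Then there exists F₀ > 0 such that for every F > F₀ the following holds: if h_xx ∈ ℂ, h_xy ∈ ℂ^{n-1}, h_yy a symmetric (n−1)×(n−1) complex matrix, β_x ∈ ℂ and β_y ∈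 ℂ^{n-1} satisfy (i) (ξ − iF)·h_xx + η·h_xy + Σ_{j,k} a_{jk}(h_yy)_{jk} + b·β_y = 0; (ii) (ξ − iF)·h_xy + h_yy η = 0 (componentwise, (ξ − iF)(h_xy)ⱼ + Σ_k η_k (h_yy)_{kj} = 0); (iii) (ξ − iF)·β_x + η·β_y = 0; and (iv) for every unit vector Ŷ ∈ ℝ^{n-1}, θ₂(Ŷ)·h_xx + 2 θ₁(Ŷ)(Ŷ·h_xy) + Ŷᵀ h_yy Ŷ + θ₁(Ŷ)·β_x + Ŷ·β_y = 0; then h_xx = 0, h_xy = 0, h_yy = 0, β_x = 0 and β_y = 0. -/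
/-!
Condition (iv) says that a quadratic form plus a linear form in `Ŷ` vanishes on the unit sphere.
Evaluating at `±e_j` and `(e_j + e_k)/√2` shows that all coefficients vanish
(`coeff_eq_zero`), so with `z = ξ - iF`, `w = z/(ξ² + F²) = 1/z̄`,
* `h_yy = w (η ⊗ h_xy + h_xy ⊗ η) - (w² η ⊗ η + 2i w Q⁺) h_xx`,
* `β_y = w (β_x η - 2i h_xx α⁻)`.

Inserting this into (ii) and (iii) and writing `t = η · h_xy`, `N = ξ² + F²` gives
* `(N + 2|η|²) t = (w |η|⁴ + 2i η·Q⁺η) h_xx`,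
* `(N + |η|²) h_xy = (w |η|² η + 2i Q⁺η) h_xx - t η`,
* `(N + |η|²) β_x = 2i (η·α⁻) h_xx`.

Since `|w| ≤ 1` and `N ≥ 1` for `F ≥ 1`, every unknown is bounded by a constant, independent of `F`,
times `|h_xx|`. Then (i) reads `z h_xx = O(|h_xx|)` while `|z| ≥ F`, so `h_xx = 0` for large `F`,
and all the other unknowns vanish with it. The uniform bounds are kept as `=O[𝓟 S]` relations over
the set `S` of all solutions with `F ≥ 1`, which avoids naming the constants.
-/

open scoped BigOperators

open Asymptotics Filter

/-- A quadratic plus a linear form vanishing on the real unit sphere has zero coefficients. -/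
lemma coeff_eq_zero {m : ℕ} (A : Matrix (Fin m) (Fin m) ℂ) (hA : A.IsSymm) (l : Fin m → ℂ)
    (h : ∀ Y : Fin m → ℝ, (∑ j, Y j ^ 2) = 1 →
      (∑ j, ∑ k, (Y j : ℂ) * A j k * (Y k : ℂ)) + ∑ j, (Y j : ℂ) * l j = 0) :
    (∀ j k, A j k = 0) ∧ ∀ j, l j = 0 := by
  have single (j : Fin m) (s : ℝ) (hs : s ^ 2 = 1) : (s : ℂ) ^ 2 * A j j + s * l j = 0 := by
    have := h (Pi.single j s) (by simp [Pi.single_apply, hs])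
    simp [Pi.single_apply, apply_ite Complex.ofReal] at this
    linear_combination this
  have hd (j : Fin m) : A j j = 0 := by
    have h1 := single j 1 (by norm_num)
    have h2 := single j (-1) (by norm_num)
    push_cast at h1 h2
    linear_combination (h1 + h2) / 2
  have hl (j : Fin m) : l j = 0 := by
    have h1 := single j 1 (by norm_num)
    have h2 := single j (-1) (by norm_num)
    push_cast at h1 h2
    linear_combination (h1 - h2) / 2
  refine ⟨fun j k => ?_, hl⟩
  rcases eq_or_ne j k with rfl | hjk
  · exact hd j
  obtain ⟨c, hc⟩ : ∃ c : ℝ, c ^ 2 = 1 / 2 := ⟨√(1 / 2), Real.sq_sqrt (by norm_num)⟩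
  have hc' : (c : ℂ) ^ 2 = 1 / 2 := by
    rw [← Complex.ofReal_pow, hc]
    norm_num
  have := h (fun i => (if i = j then c else 0) + (if i = k then c else 0)) (by
    simp [add_sq, Finset.sum_add_distrib, hjk.symm, hc]
    norm_num)
  simp [add_mul, mul_add, Finset.sum_add_distrib, hl, hd, apply_ite Complex.ofReal] at this
  have hs : A k j = A j k := hA.apply j k
  rw [hs] at this
  linear_combination this - 2 * A j k * hc'

/-- The unknowns of the linear system, together with the parameter `F`. -/
structure Unknowns (m : ℕ) where
  /-- the weight parameter -/
  F : ℝ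
  /-- normal-normal component of the 2-tensor -/
  hxx : ℂ
  /-- normal-tangential component of the 2-tensor -/
  hxy : Fin m → ℂ
  /-- tangential component of the 2-tensor -/
  hyy : Matrix (Fin m) (Fin m) ℂ
  /-- normal component of the 1-form -/
  βx : ℂ
  /-- tangential component of the 1-form -/
  βy : Fin m → ℂ

/-- The factor `z = ξ - iF`. -/
noncomputable def Unknowns.z {m : ℕ} (ξ : ℝ) (u : Unknowns m) : ℂ := ξ - Complex.I * u.F

/-- The factor `w = (ξ - iF)/(ξ² + F²)`, the inverse of `ξ + iF`. -/
noncomputable def Unknowns.w {m : ℕ} (ξ : ℝ) (u : Unknowns m) : ℂ :=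
  (ξ - Complex.I * u.F) / ((ξ ^ 2 + u.F ^ 2 : ℝ) : ℂ)

/-- `u` has weight `F ≥ 1` and solves the system made of (ii), (iii) and the vanishing of the
coefficients in (iv). -/
structure Unknowns.Solves {m : ℕ} (ξ : ℝ) (η αm : Fin m → ℝ) (Q : Matrix (Fin m) (Fin m) ℝ)
    (u : Unknowns m) : Prop where
  one_le : 1 ≤ u.F
  hyy_eq : ∀ j k, u.hyy j k = u.w ξ * (η j * u.hxy k + η k * u.hxy j)
    - (u.w ξ ^ 2 * η j * η k + 2 * Complex.I * u.w ξ * Q j k) * u.hxx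
  βy_eq : ∀ j, u.βy j = u.w ξ * (η j * u.βx - 2 * Complex.I * αm j * u.hxx)
  eq_ii : ∀ j, u.z ξ * u.hxy j + ∑ k, (η k : ℂ) * u.hyy k j = 0
  eq_iii : u.z ξ * u.βx + ∑ j, (η j : ℂ) * u.βy j = 0

namespace Unknowns.Solves

variable {m : ℕ} {ξ : ℝ} {η αm : Fin m → ℝ} {Q : Matrix (Fin m) (Fin m) ℝ} {u : Unknowns m}

lemma one_le_N (hu : u.Solves ξ η αm Q) : 1 ≤ ξ ^ 2 + u.F ^ 2 := by
  nlinarith [hu.one_le, sq_nonneg ξ]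

lemma conj_mul_w (hu : u.Solves ξ η αm Q) : ((ξ : ℂ) + Complex.I * u.F) * u.w ξ = 1 := by
  have hN : ((ξ ^ 2 + u.F ^ 2 : ℝ) : ℂ) ≠ 0 := by
    exact_mod_cast (lt_of_lt_of_le one_pos hu.one_le_N).ne'
  rw [Unknowns.w, ← mul_div_assoc, div_eq_one_iff_eq hN]
  push_cast
  linear_combination -(u.F : ℂ) ^ 2 * Complex.I_sq

lemma conj_mul_z (u : Unknowns m) :
    ((ξ : ℂ) + Complex.I * u.F) * u.z ξ = ((ξ ^ 2 + u.F ^ 2 : ℝ) : ℂ) := by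
  rw [Unknowns.z]
  push_cast
  linear_combination -(u.F : ℂ) ^ 2 * Complex.I_sq

lemma norm_w_le (hu : u.Solves ξ η αm Q) : ‖u.w ξ‖ ≤ 1 := by
  have h := congrArg norm hu.conj_mul_w
  rw [norm_mul, norm_one] at h
  have h1 : 1 ≤ ‖(ξ : ℂ) + Complex.I * u.F‖ := by
    have := (le_abs_self _).trans (Complex.abs_im_le_norm ((ξ : ℂ) + Complex.I * u.F))
    simp at this
    exact hu.one_le.trans this
  nlinarith [norm_nonneg (u.w ξ)]

lemma le_norm_z (u : Unknowns m) : u.F ≤ ‖u.z ξ‖ := by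
  have := (neg_le_abs _).trans (Complex.abs_im_le_norm (u.z ξ))
  simpa [Unknowns.z] using this

/-- Equation (iii) with `β_y` eliminated, multiplied by `z̄`. -/
lemma βx_eq (hu : u.Solves ξ η αm Q) :
    ((ξ ^ 2 + u.F ^ 2 + ∑ j, η j ^ 2 : ℝ) : ℂ) * u.βx
      = 2 * Complex.I * (∑ j, (η j : ℂ) * αm j) * u.hxx := by
  have h : ∑ j, (η j : ℂ) * u.βy j
      = u.w ξ * ((∑ j, (η j : ℂ) ^ 2) * u.βx
        - 2 * Complex.I * (∑ j, (η j : ℂ) * αm j) * u.hxx) := by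
    simp only [hu.βy_eq, Finset.sum_mul, Finset.mul_sum, ← Finset.sum_sub_distrib]
    exact Finset.sum_congr rfl fun j _ => by ring
  have h3 := hu.eq_iii
  rw [h] at h3
  have hz := conj_mul_z (ξ := ξ) u
  push_cast at hz ⊢
  linear_combination ((ξ : ℂ) + Complex.I * u.F) * h3 - u.βx * hz
    - ((∑ j, (η j : ℂ) ^ 2) * u.βx
        - 2 * Complex.I * (∑ j, (η j : ℂ) * αm j) * u.hxx) * hu.conj_mul_w

/-- Equation (ii) with `h_yy` eliminated, multiplied by `z̄`. -/
lemma hxy_eq (hu : u.Solves ξ η αm Q) (j : Fin m) :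
    ((ξ ^ 2 + u.F ^ 2 + ∑ j, η j ^ 2 : ℝ) : ℂ) * u.hxy j
      = (u.w ξ * (∑ k, (η k : ℂ) ^ 2) * η j + 2 * Complex.I * ∑ k, (η k : ℂ) * Q k j) * u.hxx
        - (∑ k, (η k : ℂ) * u.hxy k) * η j := by
  have h : ∑ k, (η k : ℂ) * u.hyy k j
      = u.w ξ * ((∑ k, (η k : ℂ) ^ 2) * u.hxy j + (∑ k, (η k : ℂ) * u.hxy k) * η j
        - (u.w ξ * (∑ k, (η k : ℂ) ^ 2) * η j
          + 2 * Complex.I * ∑ k, (η k : ℂ) * Q k j) * u.hxx) := by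
    simp only [hu.hyy_eq, Finset.sum_mul, Finset.mul_sum, ← Finset.sum_sub_distrib,
      ← Finset.sum_add_distrib]
    exact Finset.sum_congr rfl fun j _ => by ring
  have h2 := hu.eq_ii j
  rw [h] at h2
  have hz := conj_mul_z (ξ := ξ) u
  push_cast at hz ⊢
  linear_combination ((ξ : ℂ) + Complex.I * u.F) * h2 - u.hxy j * hz
    - ((∑ k, (η k : ℂ) ^ 2) * u.hxy j + (∑ k, (η k : ℂ) * u.hxy k) * η j
        - (u.w ξ * (∑ k, (η k : ℂ) ^ 2) * η j
          + 2 * Complex.I * ∑ k, (η k : ℂ) * Q k j) * u.hxx) * hu.conj_mul_w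

/-- `hxy_eq` contracted with `η`. -/
lemma dot_hxy_eq (hu : u.Solves ξ η αm Q) :
    ((ξ ^ 2 + u.F ^ 2 + 2 * ∑ j, η j ^ 2 : ℝ) : ℂ) * (∑ k, (η k : ℂ) * u.hxy k)
      = (u.w ξ * (∑ k, (η k : ℂ) ^ 2) ^ 2
        + 2 * Complex.I * ∑ j, (η j : ℂ) * ∑ k, (η k : ℂ) * Q k j) * u.hxx := by
  have h : ∑ j, (η j : ℂ) * (((ξ ^ 2 + u.F ^ 2 + ∑ j, η j ^ 2 : ℝ) : ℂ) * u.hxy j)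
      = ∑ j, (η j : ℂ) * ((u.w ξ * (∑ k, (η k : ℂ) ^ 2) * η j
        + 2 * Complex.I * ∑ k, (η k : ℂ) * Q k j) * u.hxx
        - (∑ k, (η k : ℂ) * u.hxy k) * η j) :=
    Finset.sum_congr rfl fun j _ => by rw [hu.hxy_eq j]
  have hl (c : ℂ) : ∑ j, (η j : ℂ) * (c * u.hxy j) = c * ∑ j, (η j : ℂ) * u.hxy j := by
    rw [Finset.mul_sum]
    exact Finset.sum_congr rfl fun j _ => by ring
  have hr (c t : ℂ) (f : Fin m → ℂ) :
      ∑ j, (η j : ℂ) * ((c * η j + 2 * Complex.I * f j) * u.hxx - t * η j)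
        = (c * (∑ j, (η j : ℂ) ^ 2) + 2 * Complex.I * ∑ j, (η j : ℂ) * f j) * u.hxx
          - t * ∑ j, (η j : ℂ) ^ 2 := by
    simp only [Finset.sum_mul, Finset.mul_sum, ← Finset.sum_sub_distrib,
      ← Finset.sum_add_distrib]
    exact Finset.sum_congr rfl fun j _ => by ring
  rw [hl, hr] at h
  push_cast at h ⊢
  linear_combination h

end Unknowns.Solves

/-- All solutions of the system, for all weights `F ≥ 1`. -/
def solutions {m : ℕ} (ξ : ℝ) (η αm : Fin m → ℝ) (Q : Matrix (Fin m) (Fin m) ℝ) :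
    Set (Unknowns m) :=
  {u | u.Solves ξ η αm Q}

section Bounds

variable {m : ℕ} (ξ : ℝ) (η αm : Fin m → ℝ) (Q : Matrix (Fin m) (Fin m) ℝ)

lemma isBigO_w : (fun u : Unknowns m => u.w ξ) =O[𝓟 (solutions ξ η αm Q)] fun _ => (1 : ℂ) :=
  isBigO_principal.2 ⟨1, fun u hu => by simpa using hu.norm_w_le⟩

/-- Division by a real factor at least `1` preserves a uniform bound. -/
lemma isBigO_of_mul_eq {c : Unknowns m → ℝ} {f g k : Unknowns m → ℂ}
    (hg : g =O[𝓟 (solutions ξ η αm Q)] k)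
    (hc : ∀ u : Unknowns m, u.Solves ξ η αm Q → 1 ≤ c u)
    (h : ∀ u : Unknowns m, u.Solves ξ η αm Q → (c u : ℂ) * f u = g u) :
    f =O[𝓟 (solutions ξ η αm Q)] k := by
  refine IsBigO.trans (isBigO_principal.2 ⟨1, fun u hu => ?_⟩) hg
  rw [← h u hu, norm_mul, Complex.norm_real, Real.norm_eq_abs, one_mul]
  exact le_mul_of_one_le_left (norm_nonneg _) ((hc u hu).trans (le_abs_self _))

variable {ξ η αm Q} in
/-- Multiplying by an affine function of the bounded quantity `w` preserves a uniform bound. -/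
lemma isBigO_affine_w {f k : Unknowns m → ℂ} (c d : ℂ) (hf : f =O[𝓟 (solutions ξ η αm Q)] k) :
    (fun u : Unknowns m => (u.w ξ * c + d) * f u) =O[𝓟 (solutions ξ η αm Q)] k := by
  have h1 : (fun u : Unknowns m => u.w ξ * c + d) =O[𝓟 (solutions ξ η αm Q)] fun _ => (1 : ℂ) :=
    (((isBigO_w ξ η αm Q).mul (isBigO_refl (fun _ => c) _)).trans
      (isBigO_const_const _ one_ne_zero _)).add (isBigO_const_const _ one_ne_zero _)
  simpa using h1.mul hf

lemma isBigO_βx : (fun u : Unknowns m => u.βx) =O[𝓟 (solutions ξ η αm Q)] fun u => u.hxx :=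
  isBigO_of_mul_eq ξ η αm Q ((isBigO_refl (fun u : Unknowns m => u.hxx) _).const_mul_left
      (2 * Complex.I * ∑ j, (η j : ℂ) * αm j))
    (fun u hu => le_add_of_le_of_nonneg hu.one_le_N (by positivity)) fun u hu => hu.βx_eq

lemma isBigO_βy (j : Fin m) :
    (fun u : Unknowns m => u.βy j) =O[𝓟 (solutions ξ η αm Q)] fun u => u.hxx := by
  have h := ((isBigO_βx ξ η αm Q).const_mul_left (η j : ℂ)).sub
    ((isBigO_refl (fun u : Unknowns m => u.hxx) _).const_mul_left (2 * Complex.I * αm j))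
  refine (isBigO_affine_w 1 0 h).congr' (eventually_principal.2 fun u hu => ?_) .rfl
  linear_combination -hu.βy_eq j

lemma isBigO_dot_hxy :
    (fun u : Unknowns m => ∑ k, (η k : ℂ) * u.hxy k) =O[𝓟 (solutions ξ η αm Q)] fun u => u.hxx :=
  isBigO_of_mul_eq ξ η αm Q
    (isBigO_affine_w ((∑ k, (η k : ℂ) ^ 2) ^ 2)
      (2 * Complex.I * ∑ j, (η j : ℂ) * ∑ k, (η k : ℂ) * Q k j)
      (isBigO_refl (fun u : Unknowns m => u.hxx) _))
    (fun u hu => le_add_of_le_of_nonneg hu.one_le_N (by positivity)) fun u hu => hu.dot_hxy_eq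

lemma isBigO_hxy (j : Fin m) :
    (fun u : Unknowns m => u.hxy j) =O[𝓟 (solutions ξ η αm Q)] fun u => u.hxx := by
  have h := (isBigO_affine_w ((∑ k, (η k : ℂ) ^ 2) * η j)
      (2 * Complex.I * ∑ k, (η k : ℂ) * Q k j)
      (isBigO_refl (fun u : Unknowns m => u.hxx) _)).sub
    ((isBigO_dot_hxy ξ η αm Q).const_mul_left (η j : ℂ))
  refine isBigO_of_mul_eq ξ η αm Q (c := fun u => ξ ^ 2 + u.F ^ 2 + ∑ j, η j ^ 2) h
    (fun u hu => le_add_of_le_of_nonneg hu.one_le_N (by positivity)) fun u hu => ?_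
  rw [hu.hxy_eq j]
  ring

lemma isBigO_hyy (j k : Fin m) :
    (fun u : Unknowns m => u.hyy j k) =O[𝓟 (solutions ξ η αm Q)] fun u => u.hxx := by
  have h1 := ((isBigO_hxy ξ η αm Q k).const_mul_left (η j : ℂ)).add
    ((isBigO_hxy ξ η αm Q j).const_mul_left (η k : ℂ))
  have h2 := isBigO_affine_w (η j * η k) (2 * Complex.I * Q j k)
      (isBigO_refl (fun u : Unknowns m => u.hxx) (𝓟 (solutions ξ η αm Q)))
  refine (isBigO_affine_w 1 0 (h1.sub h2)).congr' (eventually_principal.2 fun u hu => ?_) .rfl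
  linear_combination -hu.hyy_eq j k

end Bounds

/-- A solution with `h_xx = 0` is zero, since every unknown is `O(h_xx)`. -/
lemma Unknowns.Solves.eq_zero {m : ℕ} {ξ : ℝ} {η αm : Fin m → ℝ}
    {Q : Matrix (Fin m) (Fin m) ℝ} {u : Unknowns m} (hu : u.Solves ξ η αm Q) (h0 : u.hxx = 0) :
    u.hxy = 0 ∧ u.hyy = 0 ∧ u.βx = 0 ∧ u.βy = 0 := by
  have key {f : Unknowns m → ℂ} (hf : f =O[𝓟 (solutions ξ η αm Q)] fun u => u.hxx) :
      f u = 0 := by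
    obtain ⟨c, hc⟩ := isBigO_principal.1 hf
    simpa [h0] using hc u hu
  exact ⟨funext fun j => key (isBigO_hxy ξ η αm Q j),
    Matrix.ext fun j k => key (isBigO_hyy ξ η αm Q j k), key (isBigO_βx ξ η αm Q),
    funext fun j => key (isBigO_βy ξ η αm Q j)⟩

/-- algebraic core of the ellipticity of `B_F` at finite points:
with `α(Ŷ) = α⁺(Ŷ) + α⁻·Ŷ` (`α⁺` positive definite quadratic, given by `Qp`),
`θ₁(Ŷ) = -(ξ - iF)(Ŷ·η)/(ξ² + F²)` and
`θ₂(Ŷ) = θ₁(Ŷ)² + 2i α(Ŷ)(ξ - iF)/(ξ² + F²)`, there exists `F₀ > 0` such that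
for every `F > F₀`, any `(h_xx, h_xy, h_yy, β_x, β_y)` in the kernel of the
scattering principal symbol of `δ^s_F` (conditions (i)-(iii)) on which the
quadratic form of the scattering symbol of `B_F` vanishes (condition (iv))
must be zero. -/
theorem stmt_6 (n : ℕ) (hn : 3 ≤ n) (ξ : ℝ) (η : Fin (n - 1) → ℝ)
    (a : Matrix (Fin (n - 1)) (Fin (n - 1)) ℝ) (ha : a.IsSymm)
    (b αm : Fin (n - 1) → ℝ)
    (Qp : Matrix (Fin (n - 1)) (Fin (n - 1)) ℝ) (hQ : Qp.PosDef) :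
    ∃ F₀ > (0 : ℝ), ∀ F : ℝ, F > F₀ →
      ∀ (hxx : ℂ) (hxy : Fin (n - 1) → ℂ)
        (hyy : Matrix (Fin (n - 1)) (Fin (n - 1)) ℂ) (βx : ℂ)
        (βy : Fin (n - 1) → ℂ), hyy.IsSymm →
        (((ξ : ℂ) - Complex.I * F) * hxx + (∑ j, (η j : ℂ) * hxy j)
            + (∑ j, ∑ k, (a j k : ℂ) * hyy j k)
            + (∑ j, (b j : ℂ) * βy j) = 0) →
        (∀ j, ((ξ : ℂ) - Complex.I * F) * hxy j
            + (∑ k, (η k : ℂ) * hyy k j) = 0) →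
        (((ξ : ℂ) - Complex.I * F) * βx + (∑ j, (η j : ℂ) * βy j) = 0) →
        (∀ Y : Fin (n - 1) → ℝ, (∑ j, Y j ^ 2) = 1 →
          ((-(((ξ : ℂ) - Complex.I * F) * (((∑ j, Y j * η j : ℝ)) : ℂ)
                  / ((ξ ^ 2 + F ^ 2 : ℝ) : ℂ))) ^ 2
              + 2 * Complex.I
                * ((((∑ j, ∑ k, Y j * Qp j k * Y k) + ∑ j, αm j * Y j : ℝ)) : ℂ)
                * (((ξ : ℂ) - Complex.I * F) / ((ξ ^ 2 + F ^ 2 : ℝ) : ℂ))) * hxx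
            + 2 * (-(((ξ : ℂ) - Complex.I * F) * (((∑ j, Y j * η j : ℝ)) : ℂ)
                  / ((ξ ^ 2 + F ^ 2 : ℝ) : ℂ)))
              * (∑ j, (Y j : ℂ) * hxy j)
            + (∑ j, ∑ k, (Y j : ℂ) * hyy j k * (Y k : ℂ))
            + (-(((ξ : ℂ) - Complex.I * F) * (((∑ j, Y j * η j : ℝ)) : ℂ)
                  / ((ξ ^ 2 + F ^ 2 : ℝ) : ℂ))) * βx
            + (∑ j, (Y j : ℂ) * βy j) = 0) →
        hxx = 0 ∧ hxy = 0 ∧ hyy = 0 ∧ βx = 0 ∧ βy = 0 := by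
  have hO : (fun u : Unknowns (n - 1) => (∑ j, (η j : ℂ) * u.hxy j)
      + (∑ j, ∑ k, (a j k : ℂ) * u.hyy j k) + ∑ j, (b j : ℂ) * u.βy j)
      =O[𝓟 (solutions ξ η αm Qp)] fun u => u.hxx :=
    ((isBigO_dot_hxy ξ η αm Qp).add
      (IsBigO.fun_sum fun j _ => IsBigO.fun_sum fun k _ =>
        (isBigO_hyy ξ η αm Qp j k).const_mul_left (a j k : ℂ))).add
      (IsBigO.fun_sum fun j _ => (isBigO_βy ξ η αm Qp j).const_mul_left (b j : ℂ))
  obtain ⟨C, hC⟩ := isBigO_principal.1 hO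
  refine ⟨max 1 C, by positivity, ?_⟩
  intro F hF hxx hxy hyy βx βy hsymm h1 h2 h3 h4
  have hF1 : 1 ≤ F := (le_max_left _ _).trans hF.le
  have hFC : C < F := (le_max_right _ _).trans_lt hF
  have hQs (j k) : Qp k j = Qp j k := by simpa using hQ.1.apply j k
  set u : Unknowns (n - 1) := ⟨F, hxx, hxy, hyy, βx, βy⟩ with hu_def
  obtain ⟨hA, hl⟩ := coeff_eq_zero
    (Matrix.of fun j k => hyy j k - u.w ξ * (η j * hxy k + η k * hxy j)
      + (u.w ξ ^ 2 * η j * η k + 2 * Complex.I * u.w ξ * Qp j k) * hxx)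
    (Matrix.IsSymm.ext fun j k => by
      simp only [Matrix.of_apply, hQs j k, hsymm.apply j k]
      ring)
    (fun j => βy j - u.w ξ * (η j * βx - 2 * Complex.I * αm j * hxx))
    (fun Y hY => by
      have hw : -(((ξ : ℂ) - Complex.I * F) * (((∑ j, Y j * η j : ℝ)) : ℂ)
          / ((ξ ^ 2 + F ^ 2 : ℝ) : ℂ)) = -(u.w ξ * ∑ j, (Y j : ℂ) * η j) := by
        simp only [Unknowns.w, hu_def]
        push_cast
        ring
      have hw' : ((ξ : ℂ) - Complex.I * F) / ((ξ ^ 2 + F ^ 2 : ℝ) : ℂ) = u.w ξ := rfl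
      have h := h4 Y hY
      rw [hw, hw'] at h
      generalize u.w ξ = w at h ⊢
      have e1 : ∑ j, ∑ k, (Y j : ℂ) * (Matrix.of fun j k =>
            hyy j k - w * (η j * hxy k + η k * hxy j)
            + (w ^ 2 * η j * η k + 2 * Complex.I * w * Qp j k) * hxx) j k * (Y k : ℂ)
          = (∑ j, ∑ k, (Y j : ℂ) * hyy j k * (Y k : ℂ))
            - 2 * w * ((∑ j, (Y j : ℂ) * η j) * ∑ k, (Y k : ℂ) * hxy k)
            + w ^ 2 * hxx * ((∑ j, (Y j : ℂ) * η j) * ∑ k, (Y k : ℂ) * η k)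
            + 2 * Complex.I * w * hxx * ∑ j, ∑ k, (Y j : ℂ) * Qp j k * Y k := by
        -- Symmetrize one of the two products so that the sums agree term by term.
        have hs : 2 * w * ((∑ j, (Y j : ℂ) * η j) * ∑ k, (Y k : ℂ) * hxy k)
            = w * ((∑ j, (Y j : ℂ) * η j) * ∑ k, (Y k : ℂ) * hxy k)
              + w * ((∑ k, (Y k : ℂ) * hxy k) * ∑ j, (Y j : ℂ) * η j) := by ring
        rw [hs]
        simp only [Finset.sum_mul_sum]
        simp only [Finset.mul_sum, ← Finset.sum_sub_distrib,
          ← Finset.sum_add_distrib, Matrix.of_apply]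
        exact Finset.sum_congr rfl fun j _ => Finset.sum_congr rfl fun k _ => by ring
      have e2 : ∑ j, (Y j : ℂ) * (βy j - w * (η j * βx - 2 * Complex.I * αm j * hxx))
          = (∑ j, (Y j : ℂ) * βy j) - w * βx * (∑ j, (Y j : ℂ) * η j)
            + 2 * Complex.I * w * hxx * ∑ j, (αm j : ℂ) * Y j := by
        simp only [Finset.mul_sum, ← Finset.sum_sub_distrib, ← Finset.sum_add_distrib]
        exact Finset.sum_congr rfl fun j _ => by ring
      rw [e1, e2]
      push_cast at h
      linear_combination h)
  have hu : u.Solves ξ η αm Qp :=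
    { one_le := hF1
      hyy_eq := fun j k => by
        have := hA j k
        rw [Matrix.of_apply] at this
        linear_combination this
      βy_eq := fun j => by linear_combination hl j
      eq_ii := h2
      eq_iii := h3 }
  have hx0 : hxx = 0 := by
    by_contra hne
    have hpos : 0 < ‖hxx‖ := norm_pos_iff.2 hne
    have hb := hC u hu
    have hz : (∑ j, (η j : ℂ) * u.hxy j)
        + (∑ j, ∑ k, (a j k : ℂ) * u.hyy j k) + (∑ j, (b j : ℂ) * u.βy j)
        = -(u.z ξ * hxx) := by
      simp only [hu_def, Unknowns.z]
      linear_combination h1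
    rw [hz, norm_neg, norm_mul] at hb
    have hle : F ≤ C :=
      (Unknowns.Solves.le_norm_z (ξ := ξ) u).trans (le_of_mul_le_mul_right hb hpos)
    exact absurd hle (not_le.2 hFC)
  exact ⟨hx0, hu.eq_zero hx0⟩
end

section
/- Let ξ ∈ ℝ, F ∈ ℝ, η, b, α⁻ ∈ ℝ^{n-1} (with n ≥ 2), and suppose ξ² + F² > ‖η‖² + 2‖b‖·‖α⁻‖. If β_y ∈ ℂ^{n-1} satisfies −2i·((b·β_y)/(ξ² + F²))·α⁻ + ((η·β_y)/(ξ² + F²))·η + β_y = 0, then β_y = 0. -/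
/-!
Writing `S = ξ² + F²`, the equation says `S • β = 2i (b·β) α⁻ - (η·β) η`. By the triangle and
Cauchy–Schwarz inequalities (`norm_pairing_le`) the right-hand side has norm at most
`(2‖b‖‖α⁻‖ + ‖η‖²) ‖β‖`, and the factor in parentheses is smaller than `S`, so `‖β‖ = 0`.
-/

open scoped BigOperators

/-- The real vector `v` regarded as a vector of the Hermitian space `ℂ^m`. -/
noncomputable def complexify {m : ℕ} (v : EuclideanSpace ℝ (Fin m)) :
    EuclideanSpace ℂ (Fin m) :=
  WithLp.toLp 2 fun k => (v k : ℂ)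

lemma norm_complexify {m : ℕ} (v : EuclideanSpace ℝ (Fin m)) : ‖complexify v‖ = ‖v‖ := by
  simp [EuclideanSpace.norm_eq, complexify]

/-- Cauchy–Schwarz for the bilinear pairing: since `v` is real, the pairing is the Hermitian
inner product of `complexify v` with `w`. -/
lemma norm_pairing_le {m : ℕ} (v : EuclideanSpace ℝ (Fin m)) (w : EuclideanSpace ℂ (Fin m)) :
    ‖∑ k, (v k : ℂ) * w k‖ ≤ ‖v‖ * ‖w‖ := by
  have h : ∑ k, (v k : ℂ) * w k = inner ℂ (complexify v) w := by
    simp [PiLp.inner_apply, complexify, mul_comm]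
  rw [h, ← norm_complexify v]
  exact norm_inner_le_norm _ _

/-- quantitative version of equation (beta_y): if
`ξ² + F² > ‖η‖² + 2‖b‖‖α⁻‖` and
`-2i (b·β_y)/(ξ² + F²) α⁻ + (η·β_y)/(ξ² + F²) η + β_y = 0` (componentwise),
then `β_y = 0`. -/
theorem stmt_7 (n : ℕ) (hn : 2 ≤ n) (ξ F : ℝ)
    (η b αm : EuclideanSpace ℝ (Fin (n - 1)))
    (hbig : ξ ^ 2 + F ^ 2 > ‖η‖ ^ 2 + 2 * ‖b‖ * ‖αm‖)
    (βy : EuclideanSpace ℂ (Fin (n - 1)))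
    (heq : ∀ j, -2 * Complex.I
          * ((∑ k, (b k : ℂ) * βy k) / ((ξ ^ 2 + F ^ 2 : ℝ) : ℂ)) * (αm j : ℂ)
        + ((∑ k, (η k : ℂ) * βy k) / ((ξ ^ 2 + F ^ 2 : ℝ) : ℂ)) * (η j : ℂ)
        + βy j = 0) :
    βy = 0 := by
  have hS : 0 < ξ ^ 2 + F ^ 2 := lt_of_le_of_lt (by positivity) hbig
  have hb := norm_pairing_le b βy
  have hη := norm_pairing_le η βy
  generalize ξ ^ 2 + F ^ 2 = S at *
  generalize ∑ k, (b k : ℂ) * βy k = p at *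
  generalize ∑ k, (η k : ℂ) * βy k = q at *
  have hS' : (S : ℂ) ≠ 0 := by exact_mod_cast hS.ne'
  have hvec : (S : ℂ) • βy = (2 * Complex.I * p) • complexify αm - q • complexify η := by
    ext j
    have h := heq j
    field_simp at h
    simp only [PiLp.smul_apply, PiLp.sub_apply, smul_eq_mul, complexify]
    linear_combination h
  have hnorm : S * ‖βy‖ ≤ 2 * ‖p‖ * ‖αm‖ + ‖q‖ * ‖η‖ := by
    have h := norm_sub_le ((2 * Complex.I * p) • complexify αm) (q • complexify η)
    rw [← hvec] at h
    simpa [norm_smul, norm_complexify, abs_of_pos hS] using h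
  by_contra hne
  have hpos : 0 < ‖βy‖ := norm_pos_iff.mpr hne
  have h1 := mul_le_mul_of_nonneg_right hb (norm_nonneg αm)
  have h2 := mul_le_mul_of_nonneg_right hη (norm_nonneg η)
  have h3 := mul_lt_mul_of_pos_right hbig hpos
  nlinarith
end
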